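/- Let q be a prime power. There is a constant C, depending only on q, such that for every integer M ≥ 1, the absolute value of [ (the sum over all monic irreducible Q ∈ F_q[X] with 1 ≤ deg Q ≤ M of q^{−(1 − 1/M)·deg Q}) minus log M ] is at most C. -/

import Mathlib

open Polynomial

/-!
Let `N d` be the number of monic irreducible polynomials of degree `d` over a field with `q`
elements. The polynomial `X ^ q ^ n - X` is squarefree and its monic irreducible factors are
exactly those of degree dividing `n`, so comparing degrees gives Gauss's formula
`∑_{d ∣ n} d * N d = q ^ n`. A proper divisor of `n` is at most `n / 2`, whence
`n * N n = q ^ n + O(√q ^ n)`.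

Grouping by degree, the sum in question is `∑_{d ≤ M} N d * q ^ (-d) * q ^ (d / M)`. Since `d ≤ M`,
the factor `q ^ (d / M)` is `1 + O(d / M)`, so each summand is `1 / d + O(1 / M) + O(√q ^ (-d))`.
The main terms add up to the harmonic number of `M`, and the errors to `O(1)`.
-/

open UniqueFactorizationMonoid (primeFactors)

section Counting

variable (F : Type*) [Field F]

/-- The number of monic irreducible polynomials of degree `n` over `F`, the analogue for `F[X]` of
the number of primes of a given size. The value is `0` if there are infinitely many of them. -/
noncomputable def monicIrreducibleCount (n : ℕ) : ℕ :=
  {Q : F[X] | Q.Monic ∧ Irreducible Q ∧ Q.natDegree = n}.ncard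

variable {F}

lemma sum_comp_natDegree_eq_sum_monicIrreducibleCount {A : Type*} [AddCommMonoid A]
    {S : Finset F[X]} {s : Finset ℕ}
    (mem_S : ∀ Q, Q ∈ S ↔ Q.Monic ∧ Irreducible Q ∧ Q.natDegree ∈ s) (f : ℕ → A) :
    ∑ Q ∈ S, f Q.natDegree = ∑ d ∈ s, monicIrreducibleCount F d • f d := by
  rw [← Finset.sum_fiberwise_of_maps_to' fun Q hQ ↦ ((mem_S Q).1 hQ).2.2]
  refine Finset.sum_congr rfl fun d hd ↦ ?_
  rw [Finset.sum_const, monicIrreducibleCount, ← Set.ncard_coe_finset]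
  congr 2
  ext Q
  simp only [Finset.coe_filter, mem_S, Set.mem_ofPred_eq]
  grind

lemma natDegree_eq_sum_primeFactors_of_squarefree [DecidableEq F] {f : F[X]} (hf : Squarefree f) :
    f.natDegree = ∑ Q ∈ primeFactors f, Q.natDegree := by
  have radical_assoc := UniqueFactorizationMonoid.radical_associated hf.isRadical hf.ne_zero
  rw [← natDegree_eq_of_degree_eq (degree_eq_degree_of_associated radical_assoc),
    UniqueFactorizationMonoid.radical, natDegree_prod]
  · rfl
  · intro Q hQ
    exact (UniqueFactorizationMonoid.irreducible_of_normalized_factor Q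
      (UniqueFactorizationMonoid.mem_primeFactors.1 hQ)).ne_zero

lemma squarefree_X_pow_card_pow_sub_X {n : ℕ} (hn : n ≠ 0) :
    Squarefree (X ^ Nat.card F ^ n - X : F[X]) := by
  obtain ⟨p, _⟩ := CharP.exists F
  have p_dvd_card : p ∣ Nat.card F := by
    rw [← CharP.cast_eq_zero_iff F p, ← nsmul_one, card_nsmul_eq_zero']
  exact (galois_poly_separable p _ (dvd_pow p_dvd_card hn)).squarefree

variable [Finite F]

lemma mem_primeFactors_X_pow_card_pow_sub_X [DecidableEq F] {n : ℕ} (hn : n ≠ 0) (Q : F[X]) :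
    Q ∈ primeFactors (X ^ Nat.card F ^ n - X : F[X]) ↔
      Q.Monic ∧ Irreducible Q ∧ Q.natDegree ∈ n.divisors := by
  rw [UniqueFactorizationMonoid.mem_primeFactors,
    Polynomial.mem_normalizedFactors_iff (squarefree_X_pow_card_pow_sub_X hn).ne_zero,
    Nat.mem_divisors]
  have dvd_iff (hQ : Irreducible Q) := hQ.natDegree_dvd_iff_dvd_X_pow_card_pow_sub_X (n := n)
  grind

lemma sum_divisors_mul_monicIrreducibleCount {n : ℕ} (hn : n ≠ 0) :
    ∑ d ∈ n.divisors, d * monicIrreducibleCount F d = Nat.card F ^ n := by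
  classical
  calc ∑ d ∈ n.divisors, d * monicIrreducibleCount F d
      = ∑ d ∈ n.divisors, monicIrreducibleCount F d • d := by simp only [smul_eq_mul, mul_comm]
    _ = ∑ Q ∈ primeFactors (X ^ Nat.card F ^ n - X : F[X]), Q.natDegree :=
      (sum_comp_natDegree_eq_sum_monicIrreducibleCount
        (mem_primeFactors_X_pow_card_pow_sub_X hn) id).symm
    _ = (X ^ Nat.card F ^ n - X : F[X]).natDegree :=
      (natDegree_eq_sum_primeFactors_of_squarefree (squarefree_X_pow_card_pow_sub_X hn)).symm
    _ = Nat.card F ^ n :=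
      FiniteField.X_pow_card_pow_sub_X_natDegree_eq F hn Finite.one_lt_card

lemma mul_monicIrreducibleCount_le (n : ℕ) :
    n * monicIrreducibleCount F n ≤ Nat.card F ^ n := by
  rcases eq_or_ne n 0 with rfl | hn
  · simp
  rw [← sum_divisors_mul_monicIrreducibleCount hn]
  exact Finset.single_le_sum_of_canonicallyOrdered (f := fun d ↦ d * monicIrreducibleCount F d)
    (Nat.mem_divisors_self n hn)

lemma le_half_of_mem_properDivisors {d n : ℕ} (hd : d ∈ n.properDivisors) : d ≤ n / 2 := by
  obtain ⟨⟨k, rfl⟩, d_lt⟩ := Nat.mem_properDivisors.1 hd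
  have two_le_k : 2 ≤ k := Nat.lt_of_mul_lt_mul_left (a := d) (by simpa using d_lt)
  exact (Nat.le_div_iff_mul_le two_pos).2 (Nat.mul_le_mul_left d two_le_k)

lemma pow_card_le_mul_monicIrreducibleCount_add (n : ℕ) :
    Nat.card F ^ n ≤ n * monicIrreducibleCount F n + Nat.card F ^ (n / 2 + 1) := by
  rcases eq_or_ne n 0 with rfl | hn
  · simpa using Nat.one_le_iff_ne_zero.2 (Nat.card_pos (α := F)).ne'
  rw [← sum_divisors_mul_monicIrreducibleCount hn, ← Nat.cons_self_properDivisors hn,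
    Finset.sum_cons]
  gcongr
  calc ∑ d ∈ n.properDivisors, d * monicIrreducibleCount F d
      ≤ ∑ d ∈ n.properDivisors, Nat.card F ^ d :=
        Finset.sum_le_sum fun d _ ↦ mul_monicIrreducibleCount_le d
    _ ≤ Nat.card F ^ (n / 2 + 1) :=
        (Nat.geomSum_lt Finite.one_lt_card fun d hd ↦
          Nat.lt_succ_of_le (le_half_of_mem_properDivisors hd)).le

lemma pow_half_le_sqrt_pow {x : ℝ} (hx : 1 ≤ x) (n : ℕ) : x ^ (n / 2) ≤ √x ^ n :=
  calc x ^ (n / 2) = √x ^ (2 * (n / 2)) := by rw [pow_mul, Real.sq_sqrt (by positivity)]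
    _ ≤ √x ^ n := pow_le_pow_right₀ (Real.one_le_sqrt.2 hx) (Nat.mul_div_le n 2)

lemma abs_mul_monicIrreducibleCount_sub_pow_card_le (n : ℕ) :
    |(n * monicIrreducibleCount F n - Nat.card F ^ n : ℝ)|
      ≤ Nat.card F * √(Nat.card F) ^ n := by
  have upper : (n * monicIrreducibleCount F n : ℝ) ≤ Nat.card F ^ n :=
    mod_cast mul_monicIrreducibleCount_le (F := F) n
  have lower : (Nat.card F ^ n : ℝ) ≤
      n * monicIrreducibleCount F n + Nat.card F ^ (n / 2) * Nat.card F :=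
    mod_cast pow_card_le_mul_monicIrreducibleCount_add (F := F) n
  have one_le_card : (1 : ℝ) ≤ Nat.card F := mod_cast Nat.card_pos (α := F)
  rw [abs_of_nonpos (sub_nonpos.2 upper)]
  calc -(n * monicIrreducibleCount F n - Nat.card F ^ n : ℝ)
      ≤ Nat.card F * Nat.card F ^ (n / 2) := by linarith
    _ ≤ Nat.card F * √(Nat.card F) ^ n := by gcongr; exact pow_half_le_sqrt_pow one_le_card n

lemma finite_setOf_natDegree_le {R : Type*} [Semiring R] [Finite R] (n : ℕ) :
    {f : R[X] | f.natDegree ≤ n}.Finite := by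
  have : Finite (degreeLT R (n + 1)) := Finite.of_equiv _ (degreeLTEquiv R (n + 1)).symm.toEquiv
  refine (degreeLT R (n + 1) : Set R[X]).toFinite.subset fun f hf ↦ ?_
  exact mem_degreeLT.2 (degree_le_natDegree.trans_lt (mod_cast Nat.lt_succ_of_le hf))

lemma finsum_monic_irreducible_comp_natDegree {A : Type*} [AddCommMonoid A] (f : ℕ → A)
    (m n : ℕ) :
    ∑ᶠ Q ∈ {Q : F[X] | Q.Monic ∧ Irreducible Q ∧ m ≤ Q.natDegree ∧ Q.natDegree ≤ n},
        f Q.natDegree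
      = ∑ d ∈ Finset.Icc m n, monicIrreducibleCount F d • f d := by
  have finite_set :
      {Q : F[X] | Q.Monic ∧ Irreducible Q ∧ m ≤ Q.natDegree ∧ Q.natDegree ≤ n}.Finite :=
    (finite_setOf_natDegree_le n).subset fun Q hQ ↦ hQ.2.2.2
  rw [finsum_mem_eq_finite_toFinset_sum _ finite_set,
    sum_comp_natDegree_eq_sum_monicIrreducibleCount (s := Finset.Icc m n) (by simp)]

end Counting

section Asymptotics

lemma abs_harmonic_sub_log_le_one (n : ℕ) : |(harmonic n : ℝ) - Real.log n| ≤ 1 := by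
  have lower : Real.log n ≤ harmonic n := by
    simpa using log_le_harmonic_floor (n : ℝ) n.cast_nonneg
  rw [abs_of_nonneg (sub_nonneg.2 lower)]
  linarith [harmonic_le_one_add_log n]

lemma sum_pow_le_inv_one_sub {r : ℝ} (r_nonneg : 0 ≤ r) (r_lt_one : r < 1) (s : Finset ℕ) :
    ∑ d ∈ s, r ^ d ≤ (1 - r)⁻¹ := by
  rw [← tsum_geometric_of_lt_one r_nonneg r_lt_one]
  exact (summable_geometric_of_lt_one r_nonneg r_lt_one).sum_le_tsum s fun _ _ ↦ by positivity

variable {q K ρ : ℝ}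

lemma mul_rpow_sub_inv_eq {d : ℕ} (q_pos : 0 < q) (hd : d ≠ 0) (a x : ℝ) :
    a * q ^ (-(1 - 1 / x) * d) - (d : ℝ)⁻¹
      = (d * a - q ^ d) * (q ^ (d / x) / (d * q ^ d)) + (q ^ (d / x) - 1) / d := by
  have rpow_eq : q ^ (-(1 - 1 / x) * d) = q ^ (d / x) / q ^ d := by
    rw [← Real.rpow_natCast, ← Real.rpow_sub q_pos]
    ring_nf
  rw [rpow_eq]
  field_simp
  ring

lemma abs_mul_rpow_sub_inv_le {a : ℝ} {d M : ℕ} (one_le_q : 1 ≤ q) (hd : d ∈ Finset.Icc 1 M)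
    (ha : |d * a - q ^ d| ≤ K * ρ ^ d) :
    |a * q ^ (-(1 - 1 / (M : ℝ)) * d) - (d : ℝ)⁻¹| ≤ q * K * (ρ / q) ^ d + (q - 1) / M := by
  obtain ⟨one_le_d, d_le_M⟩ := Finset.mem_Icc.1 hd
  have one_le_d : (1 : ℝ) ≤ d := mod_cast one_le_d
  have M_pos : (0 : ℝ) < M := one_le_d.trans_lt' one_pos |>.trans_le (mod_cast d_le_M)
  have ratio_le_one : (d : ℝ) / M ≤ 1 := (div_le_one M_pos).2 (mod_cast d_le_M)
  set t : ℝ := q ^ ((d : ℝ) / M)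
  have one_le_t : 1 ≤ t := Real.one_le_rpow one_le_q (by positivity)
  have t_le_q : t ≤ q := Real.rpow_le_self_of_one_le one_le_q ratio_le_one
  have t_le : t ≤ 1 + d / M * (q - 1) := by
    simpa using rpow_one_add_le_one_add_mul_self (s := q - 1) (by linarith)
      (p := (d : ℝ) / M) (by positivity) ratio_le_one
  have weight_le : t / (d * q ^ d) ≤ q / q ^ d :=
    div_le_div₀ (by positivity) t_le_q (by positivity)
      (le_mul_of_one_le_left (by positivity) one_le_d)
  calc |a * q ^ (-(1 - 1 / (M : ℝ)) * d) - (d : ℝ)⁻¹|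
      ≤ |d * a - q ^ d| * (t / (d * q ^ d)) + (t - 1) / d := by
        rw [mul_rpow_sub_inv_eq (by positivity) (by positivity)]
        refine (abs_add_le _ _).trans_eq ?_
        rw [abs_mul, abs_of_nonneg (a := t / _) (by positivity),
          abs_of_nonneg (a := (t - 1) / _) (div_nonneg (by linarith) (by positivity))]
    _ ≤ K * ρ ^ d * (q / q ^ d) + (d / M * (q - 1)) / d := by
        gcongr
        · exact (abs_nonneg _).trans ha
        · linarith
    _ = q * K * (ρ / q) ^ d + (q - 1) / M := by
        rw [div_pow]
        field_simp

theorem abs_sum_mul_rpow_sub_log_le {a : ℕ → ℝ} (one_le_q : 1 ≤ q)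
    (ρ_nonneg : 0 ≤ ρ) (ρ_lt_q : ρ < q) (ha : ∀ d, |d * a d - q ^ d| ≤ K * ρ ^ d) (M : ℕ) :
    |∑ d ∈ Finset.Icc 1 M, a d * q ^ (-(1 - 1 / (M : ℝ)) * d) - Real.log M|
      ≤ q * K * (1 - ρ / q)⁻¹ + q := by
  have q_pos : 0 < q := by linarith
  have K_nonneg : 0 ≤ K := by simpa using (abs_nonneg _).trans (ha 0)
  have sum_sub_harmonic_le :
      |∑ d ∈ Finset.Icc 1 M, a d * q ^ (-(1 - 1 / (M : ℝ)) * d) - harmonic M|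
        ≤ q * K * (1 - ρ / q)⁻¹ + (q - 1) :=
    calc |∑ d ∈ Finset.Icc 1 M, a d * q ^ (-(1 - 1 / (M : ℝ)) * d) - harmonic M|
        = |∑ d ∈ Finset.Icc 1 M, (a d * q ^ (-(1 - 1 / (M : ℝ)) * d) - (d : ℝ)⁻¹)| := by
          rw [harmonic_eq_sum_Icc, Finset.sum_sub_distrib]
          push_cast
          rfl
      _ ≤ ∑ d ∈ Finset.Icc 1 M, (q * K * (ρ / q) ^ d + (q - 1) / M) :=
          (Finset.abs_sum_le_sum_abs _ _).trans <| Finset.sum_le_sum fun d hd ↦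
            abs_mul_rpow_sub_inv_le one_le_q hd (ha d)
      _ = q * K * ∑ d ∈ Finset.Icc 1 M, (ρ / q) ^ d + M * ((q - 1) / M) := by
          simp [Finset.sum_add_distrib, Finset.mul_sum]
      _ ≤ q * K * (1 - ρ / q)⁻¹ + (q - 1) := by
          gcongr
          · exact sum_pow_le_inv_one_sub (by positivity) ((div_lt_one q_pos).2 ρ_lt_q) _
          · rw [mul_div_left_comm]
            exact mul_le_of_le_one_right (sub_nonneg.2 one_le_q) (div_self_le_one _)
  linarith [abs_sub_le (∑ d ∈ Finset.Icc 1 M, a d * q ^ (-(1 - 1 / (M : ℝ)) * d))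
    (harmonic M : ℝ) (Real.log M), abs_harmonic_sub_log_le_one M]

end Asymptotics

/-- there is a constant `C` depending only on `q` such that for every
`M ≥ 1`, `|∑_{Q monic irreducible, 1 ≤ deg Q ≤ M} q^{-(1 - 1/M)·deg Q} - log M| ≤ C`. -/
theorem stmt9 (q : ℕ) (hq_pp : IsPrimePow q)
    (Fq : Type) [Field Fq] [Fintype Fq] (hFq : Fintype.card Fq = q) :
    ∃ C : ℝ, ∀ M : ℕ, 1 ≤ M →
      |(∑ᶠ Q ∈ {Q : Fq[X] | Q.Monic ∧ Irreducible Q ∧ 1 ≤ Q.natDegree ∧ Q.natDegree ≤ M},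
          (q : ℝ) ^ (-(1 - 1 / (M : ℝ)) * (Q.natDegree : ℝ))) - Real.log M| ≤ C := by
  have one_lt_q : (1 : ℝ) < q := mod_cast hFq ▸ Fintype.one_lt_card (α := Fq)
  have sqrt_lt_q : √q < q :=
    (Real.sqrt_lt' (by positivity)).2 (lt_self_pow₀ one_lt_q one_lt_two)
  have prime_polynomial_theorem (d : ℕ) :
      |d * (monicIrreducibleCount Fq d : ℝ) - (q : ℝ) ^ d| ≤ q * √q ^ d := by
    simpa only [Nat.card_eq_fintype_card, hFq] using
      abs_mul_monicIrreducibleCount_sub_pow_card_le (F := Fq) d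
  refine ⟨q * q * (1 - √q / q)⁻¹ + q, fun M _ ↦ ?_⟩
  rw [finsum_monic_irreducible_comp_natDegree fun d ↦ (q : ℝ) ^ (-(1 - 1 / (M : ℝ)) * (d : ℝ))]
  simp only [nsmul_eq_mul]
  exact abs_sum_mul_rpow_sub_log_le one_lt_q.le (by positivity) sqrt_lt_q prime_polynomial_theorem M
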